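/- arXiv:1908.05583 — 2 statements merged into one kernel-verified Lean document; each statement's English description precedes it below -/
import Mathlib

section
/- The regularized maximum preserves lower bounds on Levi forms: let Ω ⊆ ℂ^n be open, let u_1,…,u_p : Ω → ℝ be C^2 functions, and let γ : Ω × ℂ^n → ℝ be a function such that for every j, every z ∈ Ω and every ξ ∈ ℂ^n, (1/4)(D²u_j(z)(ξ,ξ) + D²u_j(z)(iξ,iξ)) ≥ γ(z,ξ), where D²u_j(z) denotes the second (real) Fréchet derivative of u_j at z, viewed as a real bilinear form on ℂ^n ≅ ℝ^{2n}. Then the function u(z) = M_η(u_1(z),…,u_p(z)) is C^2 on Ω and satisfies (1/4)(D²u(z)(ξ,ξ) + D²u(z)(iξ,iξ)) ≥ γ(z,ξ) for every z ∈ Ω and ξ ∈ ℂ^n. (The quantity (1/4)(D²u(z)(ξ,ξ) + D²u(z)(iξ,iξ)) equals the Levi form, i.e. the complex Hessian ∑_{i,j} ∂²u/∂z_i∂z̄_j(z) ξ_i ξ̄_j, of u at z applied to ξ.) -/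
open MeasureTheory
open Filter Topology in
lemma secdiff_tendsto {E : Type*} [NormedAddCommGroup E] [NormedSpace ℝ E] (f : E → ℝ) (Ω : Set E)
    (hΩ : IsOpen Ω) (hf : ContDiffOn ℝ 2 f Ω) (z : E) (hz : z ∈ Ω) (ξ : E) :
    Tendsto (fun t : ℝ => (f (z + t • ξ) + f (z - t • ξ) - 2 * f z) / t ^ 2) (𝓝[>] 0)
      (𝓝 (iteratedFDerivWithin ℝ 2 f Ω z ![ξ, ξ])) := by
  have hfz : ContDiffAt ℝ 2 f z := hf.contDiffAt (hΩ.mem_nhds hz)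
  have hD : iteratedFDerivWithin ℝ 2 f Ω z ![ξ, ξ] = fderiv ℝ (fderiv ℝ f) z ξ ξ := by
    rw [iteratedFDerivWithin_of_isOpen 2 hΩ hz, iteratedFDeriv_two_apply]
    simp
  rw [hD]
  have hline : ∀ t : ℝ, HasDerivAt (fun t : ℝ => z + t • ξ) ξ t := fun t => by
    simpa using ((hasDerivAt_id t).smul_const ξ).const_add z
  have hline' : ∀ t : ℝ, HasDerivAt (fun t : ℝ => z - t • ξ) (-ξ) t := fun t => by
    simpa using ((hasDerivAt_id t).smul_const ξ).const_sub z
  have hmem : ∀ᶠ t : ℝ in 𝓝 0, z + t • ξ ∈ Ω := by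
    have := (hline 0).continuousAt
    exact this.eventually_mem (hΩ.mem_nhds (by simpa using hz))
  have hmem' : ∀ᶠ t : ℝ in 𝓝 0, z - t • ξ ∈ Ω := by
    have := (hline' 0).continuousAt
    exact this.eventually_mem (hΩ.mem_nhds (by simpa using hz))
  have hdiff : ∀ y ∈ Ω, HasFDerivAt f (fderiv ℝ f y) y := fun y hy =>
    ((hf.contDiffAt (hΩ.mem_nhds hy)).differentiableAt (by norm_num)).hasFDerivAt
  have h2 : HasFDerivAt (fderiv ℝ f) (fderiv ℝ (fderiv ℝ f) z) z :=
    ((hfz.fderiv_right (m := 1) (by norm_num)).differentiableAt (by norm_num)).hasFDerivAt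
  have hg1 : HasDerivAt (fun t : ℝ => fderiv ℝ f (z + t • ξ) ξ) (fderiv ℝ (fderiv ℝ f) z ξ ξ) 0 := by
    have h := HasFDerivAt.comp_hasDerivAt (0 : ℝ) (l := fderiv ℝ f) (f := fun t : ℝ => z + t • ξ)
      (by simpa using h2) (hline 0)
    simpa using h.clm_apply (hasDerivAt_const (0 : ℝ) ξ)
  have hg2 : HasDerivAt (fun t : ℝ => fderiv ℝ f (z - t • ξ) ξ) (-fderiv ℝ (fderiv ℝ f) z ξ ξ) 0 := by
    have h := HasFDerivAt.comp_hasDerivAt (0 : ℝ) (l := fderiv ℝ f) (f := fun t : ℝ => z - t • ξ)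
      (by simpa using h2) (hline' 0)
    simpa using h.clm_apply (hasDerivAt_const (0 : ℝ) ξ)
  have hφ := hg1.sub hg2
  have hslope := (hasDerivAt_iff_tendsto_slope.1 hφ).mono_left
    (nhdsWithin_mono (0 : ℝ) (fun x (hx : 0 < x) => ne_of_gt hx) : 𝓝[>] (0 : ℝ) ≤ 𝓝[≠] 0)
  have hcont : ContinuousAt (fun t : ℝ => f (z + t • ξ) + f (z - t • ξ) - 2 * f z) 0 := by
    have c1 : ContinuousAt (fun t : ℝ => f (z + t • ξ)) 0 :=
      ContinuousAt.comp (g := f) (by simpa using hfz.continuousAt) (hline 0).continuousAt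
    have c2 : ContinuousAt (fun t : ℝ => f (z - t • ξ)) 0 :=
      ContinuousAt.comp (g := f) (by simpa using hfz.continuousAt) (hline' 0).continuousAt
    exact (c1.add c2).sub continuousAt_const
  refine HasDerivAt.lhopital_zero_nhdsGT
    (f' := fun t => fderiv ℝ f (z + t • ξ) ξ - fderiv ℝ f (z - t • ξ) ξ)
    (g' := fun t => 2 * t) ?_ ?_ ?_ ?_ ?_ ?_
  · filter_upwards [nhdsWithin_le_nhds hmem, nhdsWithin_le_nhds hmem'] with t h1 h1'
    have a := (hdiff _ h1).comp_hasDerivAt t (hline t)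
    have b := (hdiff _ h1').comp_hasDerivAt t (hline' t)
    have := (a.add b).sub_const (2 * f z)
    simpa [sub_eq_add_neg] using this
  · refine Eventually.of_forall fun t => ?_
    simpa using hasDerivAt_pow 2 t
  · filter_upwards [self_mem_nhdsWithin] with t (ht : 0 < t)
    positivity
  · have := hcont.tendsto
    simp only [zero_smul, add_zero, sub_zero] at this
    rw [show f z + f z - 2 * f z = 0 by ring] at this
    exact this.mono_left nhdsWithin_le_nhds
  · have : Tendsto (fun t : ℝ => t ^ 2) (𝓝 0) (𝓝 (0 ^ 2)) := (continuous_pow 2).tendsto 0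
    rw [zero_pow two_ne_zero] at this
    exact this.mono_left nhdsWithin_le_nhds
  · have := hslope.div_const 2
    convert this using 2 with t
    · simp [slope_def_field]
      ring
    · ring

lemma max_cont {p : ℕ} (hp : 1 ≤ p) : Continuous (fun t : Fin p → ℝ => ⨆ j, t j) := by
  have : Nonempty (Fin p) := ⟨⟨0, hp⟩⟩
  simp_rw [← Finset.sup'_univ_eq_ciSup]
  exact Continuous.finset_sup'_apply _ (fun i _ => continuous_apply i)

noncomputable def kern (ρ : ℝ → ℝ) (p : ℕ) (η : Fin p → ℝ) (h : Fin p → ℝ) : ℝ := ∏ j, (η j)⁻¹ * ρ (h j / η j)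

lemma kern_smooth (ρ : ℝ → ℝ) (hρ_smooth : ContDiff ℝ (⊤ : ℕ∞) ρ)
    (p : ℕ) (η : Fin p → ℝ) : ContDiff ℝ (⊤ : ℕ∞) (kern ρ p η) := by
  unfold kern
  refine contDiff_prod fun j _ => contDiff_const.mul (hρ_smooth.comp ?_)
  exact (contDiff_apply ℝ ℝ j).div_const _

lemma kern_nonneg (ρ : ℝ → ℝ) (hρ_nonneg : ∀ x, 0 ≤ ρ x)
    (p : ℕ) (η : Fin p → ℝ) (hη : ∀ j, 0 < η j) (h) : 0 ≤ kern ρ p η h :=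
  Finset.prod_nonneg fun j _ => mul_nonneg (inv_nonneg.2 (hη j).le) (hρ_nonneg _)

lemma kern_supp (ρ : ℝ → ℝ) (hρ_supp : Function.support ρ ⊆ Set.Icc (-1 : ℝ) 1)
    (p : ℕ) (η : Fin p → ℝ) (hη : ∀ j, 0 < η j) : HasCompactSupport (kern ρ p η) := by
  refine HasCompactSupport.intro (K := Set.pi Set.univ fun j => Set.Icc (-η j) (η j))
    (isCompact_univ_pi fun j => isCompact_Icc) fun x hx => ?_
  rw [Set.mem_univ_pi] at hx
  push Not at hx
  obtain ⟨j, hj⟩ := hx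
  refine Finset.prod_eq_zero (Finset.mem_univ j) ?_
  have : ρ (x j / η j) = 0 := by
    by_contra hne
    apply hj
    have := hρ_supp hne
    have h0 := hη j
    rw [Set.mem_Icc, le_div_iff₀ h0, div_le_iff₀ h0] at this
    constructor <;> linarith
  simp [this]

lemma kern_int (ρ : ℝ → ℝ) (hρ_int : ∫ x : ℝ, ρ x = 1)
    (p : ℕ) (η : Fin p → ℝ) (hη : ∀ j, 0 < η j) : ∫ h, kern ρ p η h = 1 := by
  unfold kern
  rw [integral_fintype_prod_volume_eq_prod (fun j (x : ℝ) => (η j)⁻¹ * ρ (x / η j))]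
  refine Finset.prod_eq_one fun j _ => ?_
  rw [integral_const_mul, Measure.integral_comp_div, hρ_int]
  have := hη j
  simp [abs_of_pos this, this.ne']

lemma regmax_integrable {p : ℕ} (hp : 1 ≤ p) (K : (Fin p → ℝ) → ℝ) (hK : ContDiff ℝ (⊤ : ℕ∞) K)
    (hKs : HasCompactSupport K) (t : Fin p → ℝ) :
    Integrable (fun h : Fin p → ℝ => (⨆ j, (t j + h j)) * K h) := by
  refine Continuous.integrable_of_hasCompactSupport ?_ hKs.mul_left
  refine Continuous.mul ?_ hK.continuous
  exact (max_cont hp).comp (continuous_const.add continuous_id : Continuous fun h => t + h)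

lemma regmax_smooth {p : ℕ} (hp : 1 ≤ p) (K : (Fin p → ℝ) → ℝ) (hK : ContDiff ℝ (⊤ : ℕ∞) K)
    (hKs : HasCompactSupport K) :
    ContDiff ℝ (⊤ : ℕ∞) (fun t : Fin p → ℝ => ∫ h : Fin p → ℝ, (⨆ j, (t j + h j)) * K h) := by
  have h1 : HasCompactSupport (fun x => K (-x)) := hKs.comp_homeomorph (Homeomorph.neg _)
  have h2 : ContDiff ℝ (⊤ : ℕ∞) (fun x => K (-x)) := hK.comp contDiff_neg
  have h3 := h1.contDiff_convolution_right (ContinuousLinearMap.mul ℝ ℝ) (μ := volume)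
    (max_cont hp).locallyIntegrable h2
  convert h3 using 1
  ext t
  rw [convolution_def, ← integral_add_right_eq_self (fun y => (ContinuousLinearMap.mul ℝ ℝ) _ _) t]
  refine integral_congr_ae (Filter.Eventually.of_forall fun h => ?_)
  simp [add_comm]

lemma regmax_key {p : ℕ} (hp : 1 ≤ p) (K : (Fin p → ℝ) → ℝ) (hK : ContDiff ℝ (⊤ : ℕ∞) K)
    (hKs : HasCompactSupport K) (hK0 : ∀ h, 0 ≤ K h) (hK1 : ∫ h, K h = 1)
    (M : (Fin p → ℝ) → ℝ)
    (hM : ∀ t : Fin p → ℝ, M t = ∫ h : Fin p → ℝ, (⨆ j, (t j + h j)) * K h)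
    (x a b c d : Fin p → ℝ) (s : ℝ) (H : ∀ j, 4 * (x j + s) ≤ a j + b j + c j + d j) :
    4 * (M x + s) ≤ M a + M b + M c + M d := by
  have hI := regmax_integrable hp K hK hKs
  have hKi : Integrable K := hK.continuous.integrable_of_hasCompactSupport hKs
  have : Nonempty (Fin p) := ⟨⟨0, hp⟩⟩
  have e1 : 4 * (M x + s) = ∫ h : Fin p → ℝ, 4 * ((⨆ j, (x j + h j)) * K h + s * K h) := by
    rw [integral_const_mul, integral_add (hI x) (hKi.const_mul s), integral_const_mul, hK1, hM x,
      mul_one]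
  have e2 : M a + M b + M c + M d = ∫ h : Fin p → ℝ, ((⨆ j, (a j + h j)) * K h +
      (⨆ j, (b j + h j)) * K h + (⨆ j, (c j + h j)) * K h + (⨆ j, (d j + h j)) * K h) := by
    rw [integral_add (by exact ((hI a).add (hI b)).add (hI c)) (hI d),
      integral_add (by exact (hI a).add (hI b)) (hI c), integral_add (hI a) (hI b),
      hM a, hM b, hM c, hM d]
  rw [e1, e2]
  refine integral_mono (((hI x).add (hKi.const_mul s)).const_mul 4)
    ((((hI a).add (hI b)).add (hI c)).add (hI d)) fun h => ?_
  have hle : ∀ (y : Fin p → ℝ) (j : Fin p), y j + h j ≤ ⨆ j, (y j + h j) := fun y j =>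
    le_ciSup (f := fun j => y j + h j) (Set.finite_range _).bddAbove j
  have : (⨆ j, (x j + h j)) ≤ ((⨆ j, (a j + h j)) + (⨆ j, (b j + h j)) + (⨆ j, (c j + h j)) +
      (⨆ j, (d j + h j))) / 4 - s := by
    refine ciSup_le fun j => ?_
    linarith [hle a j, hle b j, hle c j, hle d j, H j]
  have h4 := mul_le_mul_of_nonneg_right this (hK0 h)
  simp only
  linarith


/-- **The regularized maximum preserves lower bounds on Levi forms.**
Let `Ω ⊆ ℂⁿ` be open, `u₁, …, u_p : Ω → ℝ` of class `C²`, and `γ : Ω × ℂⁿ → ℝ` with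
`(1/4)(D²u_j(z)(ξ,ξ) + D²u_j(z)(iξ,iξ)) ≥ γ(z,ξ)` for all `j`, `z ∈ Ω`, `ξ ∈ ℂⁿ`.
Then `u(z) = M_η(u₁(z), …, u_p(z))` is `C²` on `Ω` and satisfies the same lower bound. -/
theorem regularized_max_levi_form
    (ρ : ℝ → ℝ)
    (hρ_smooth : ContDiff ℝ (⊤ : ℕ∞) ρ)
    (hρ_nonneg : ∀ x, 0 ≤ ρ x)
    (hρ_supp : Function.support ρ ⊆ Set.Icc (-1 : ℝ) 1)
    (hρ_int : ∫ x : ℝ, ρ x = 1)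
    (hρ_mean : ∫ x : ℝ, x * ρ x = 0)
    (p : ℕ) (hp : 1 ≤ p)
    (η : Fin p → ℝ) (hη : ∀ j, 0 < η j)
    (M : (Fin p → ℝ) → ℝ)
    (hM : ∀ t : Fin p → ℝ,
      M t = ∫ h : Fin p → ℝ,
        (⨆ j, (t j + h j)) * ∏ j, (η j)⁻¹ * ρ (h j / η j))
    (n : ℕ)
    (Ω : Set (Fin n → ℂ)) (hΩ : IsOpen Ω)
    (u : Fin p → (Fin n → ℂ) → ℝ)
    (hu : ∀ j, ContDiffOn ℝ 2 (u j) Ω)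
    (γ : (Fin n → ℂ) → (Fin n → ℂ) → ℝ)
    (hγ : ∀ (j : Fin p), ∀ z ∈ Ω, ∀ ξ : Fin n → ℂ,
      γ z ξ ≤ (1 / 4) *
        (iteratedFDerivWithin ℝ 2 (u j) Ω z ![ξ, ξ] +
          iteratedFDerivWithin ℝ 2 (u j) Ω z ![Complex.I • ξ, Complex.I • ξ])) :
    ContDiffOn ℝ 2 (fun z => M (fun j => u j z)) Ω ∧
      ∀ z ∈ Ω, ∀ ξ : Fin n → ℂ,
        γ z ξ ≤ (1 / 4) *
          (iteratedFDerivWithin ℝ 2 (fun z => M (fun j => u j z)) Ω z ![ξ, ξ] +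
            iteratedFDerivWithin ℝ 2 (fun z => M (fun j => u j z)) Ω z
              ![Complex.I • ξ, Complex.I • ξ]) := by
  have hKs := kern_smooth ρ hρ_smooth p η
  have hKc := kern_supp ρ hρ_supp p η hη
  have hK0 := kern_nonneg ρ hρ_nonneg p η hη
  have hK1 := kern_int ρ hρ_int p η hη
  have hM' : ∀ t : Fin p → ℝ, M t = ∫ h : Fin p → ℝ, (⨆ j, (t j + h j)) * kern ρ p η h := hM
  have hMs : ContDiff ℝ (⊤ : ℕ∞) M := by
    rw [show M = _ from funext hM']
    exact regmax_smooth hp _ hKs hKc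
  have hC : ContDiffOn ℝ 2 (fun z => M (fun j => u j z)) Ω :=
    (contDiff_infty.1 hMs 2).comp_contDiffOn (contDiffOn_pi.2 hu)
  refine ⟨hC, fun z hz ξ => ?_⟩
  have lim : ∀ f : (Fin n → ℂ) → ℝ, ContDiffOn ℝ 2 f Ω → Filter.Tendsto
      (fun t : ℝ => (f (z + t • ξ) + f (z - t • ξ) + f (z + t • (Complex.I • ξ))
        + f (z - t • (Complex.I • ξ)) - 4 * f z) / t ^ 2) (nhdsWithin 0 (Set.Ioi 0))
      (nhds (iteratedFDerivWithin ℝ 2 f Ω z ![ξ, ξ] +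
          iteratedFDerivWithin ℝ 2 f Ω z ![Complex.I • ξ, Complex.I • ξ])) := by
    intro f hf
    convert (secdiff_tendsto f Ω hΩ hf z hz ξ).add
      (secdiff_tendsto f Ω hΩ hf z hz (Complex.I • ξ)) using 2 with t
    ring
  suffices h : ∀ ε > 0, 4 * γ z ξ - ε ≤
      iteratedFDerivWithin ℝ 2 (fun z => M (fun j => u j z)) Ω z ![ξ, ξ] +
            iteratedFDerivWithin ℝ 2 (fun z => M (fun j => u j z)) Ω z
              ![Complex.I • ξ, Complex.I • ξ] by
    have := le_of_forall_sub_le h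
    linarith
  intro ε hε
  refine ge_of_tendsto (lim _ hC) ?_
  have hall : ∀ᶠ t : ℝ in nhdsWithin 0 (Set.Ioi 0), ∀ j, 4 * γ z ξ - ε <
      (u j (z + t • ξ) + u j (z - t • ξ) + u j (z + t • (Complex.I • ξ))
        + u j (z - t • (Complex.I • ξ)) - 4 * u j z) / t ^ 2 := by
    rw [Filter.eventually_all]
    intro j
    refine (lim (u j) (hu j)).eventually_const_lt ?_
    linarith [hγ j z hz ξ]
  filter_upwards [hall, self_mem_nhdsWithin] with t ht (ht0 : 0 < t)
  have ht2 : 0 < t ^ 2 := by positivity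
  rw [le_div_iff₀ ht2]
  have := regmax_key hp _ hKs hKc hK0 hK1 M hM' (fun j => u j z) (fun j => u j (z + t • ξ))
    (fun j => u j (z - t • ξ)) (fun j => u j (z + t • (Complex.I • ξ)))
    (fun j => u j (z - t • (Complex.I • ξ))) ((4 * γ z ξ - ε) * t ^ 2 / 4) (fun j => by
      have := ht j
      rw [lt_div_iff₀ ht2] at this
      linarith)
  linarith
end

section
/- Decomposition of Hermitian matrices with pinched spectrum into rank-one projections: for every n ≥ 1 and all real numbers 0 < λ < Λ < ∞, there exist an integer N ≥ 1, unit vectors ζ_1,…,ζ_N ∈ ℂ^n, and real numbers 0 < λ_* < Λ_* < ∞, all depending only on n, λ and Λ, such that every Hermitian n×n complex matrix A all of whose eigenvalues lie in the interval [λ,Λ] can be written as A = ∑_{k=1}^N β_k ζ_k ζ_k^*, i.e. a_{ij} = ∑_{k=1}^N β_k ζ_{ki} \overline{ζ_{kj}}, with coefficients β_k ∈ [λ_*, Λ_*]. Moreover, the vectors ζ_1,…,ζ_N can be chosen so that they contain any prescribed orthonormal basis of ℂ^n. -/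
namespace PinchedAux

open scoped MatrixOrder ComplexOrder Matrix.Norms.L2Operator Topology

variable {n : ℕ}

/-- The rank-one matrix `v v*`. -/
noncomputable def P (v : Fin n → ℂ) : Matrix (Fin n) (Fin n) ℂ :=
  Matrix.of (fun i j => v i * (starRingEnd ℂ) (v j))

/-- `A` is a nonnegative combination of the `v v*`, `v ∈ S`. -/
def IsRep (S : Finset (Fin n → ℂ)) (A : Matrix (Fin n) (Fin n) ℂ) : Prop :=
  ∃ f : (Fin n → ℂ) → ℝ, (∀ v, 0 ≤ f v) ∧ A = ∑ v ∈ S, f v • P v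

lemma IsRep.mono {S T : Finset (Fin n → ℂ)} (h : S ⊆ T) {A : Matrix (Fin n) (Fin n) ℂ}
    (hA : IsRep S A) : IsRep T A := by
  classical
  obtain ⟨f, hf, rfl⟩ := hA
  refine ⟨fun v => if v ∈ S then f v else 0, fun v => ?_, ?_⟩
  · dsimp only
    split_ifs
    · exact hf v
    · exact le_rfl
  · rw [← Finset.sum_subset h]
    · exact Finset.sum_congr rfl fun v hv => by simp [hv]
    · intro v _ hv
      simp [hv]

lemma IsRep.add {S : Finset (Fin n → ℂ)} {A B : Matrix (Fin n) (Fin n) ℂ}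
    (hA : IsRep S A) (hB : IsRep S B) : IsRep S (A + B) := by
  obtain ⟨f, hf, rfl⟩ := hA
  obtain ⟨g, hg, rfl⟩ := hB
  exact ⟨f + g, fun v => add_nonneg (hf v) (hg v), by
    simp [add_smul, Finset.sum_add_distrib]⟩

lemma IsRep.smul {S : Finset (Fin n → ℂ)} {A : Matrix (Fin n) (Fin n) ℂ}
    (hA : IsRep S A) {c : ℝ} (hc : 0 ≤ c) : IsRep S (c • A) := by
  obtain ⟨f, hf, rfl⟩ := hA
  exact ⟨fun v => c * f v, fun v => mul_nonneg hc (hf v), by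
    simp [mul_smul, Finset.smul_sum]⟩

lemma IsRep.zero (S : Finset (Fin n → ℂ)) : IsRep S 0 :=
  ⟨0, fun _ => le_rfl, by simp⟩

lemma IsRep.single {S : Finset (Fin n → ℂ)} {v : Fin n → ℂ} (hv : v ∈ S) : IsRep S (P v) :=
  IsRep.mono (S := {v}) (by simpa using hv) ⟨fun _ => 1, fun _ => zero_le_one, by simp⟩

lemma IsRep.sum {ι : Type*} {S : Finset (Fin n → ℂ)} (t : Finset ι)
    (A : ι → Matrix (Fin n) (Fin n) ℂ)
    (hA : ∀ i ∈ t, IsRep S (A i)) : IsRep S (∑ i ∈ t, A i) :=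
  Finset.sum_induction _ (IsRep S) (fun _ _ => IsRep.add) (IsRep.zero S) hA

lemma exists_rep_of_nonneg (A : Matrix (Fin n) (Fin n) ℂ) (hA : 0 ≤ A) :
    ∃ S : Finset (Fin n → ℂ), (∀ v ∈ S, ∑ i, Complex.normSq (v i) = 1) ∧ IsRep S A := by
  classical
  rw [Matrix.nonneg_iff_posSemidef] at hA
  have hH := hA.isHermitian
  let u : Fin n → (Fin n → ℂ) := fun k i => hH.eigenvectorBasis k i
  refine ⟨Finset.univ.image u, ?_, ?_⟩
  · intro v hv
    obtain ⟨k, -, rfl⟩ := Finset.mem_image.1 hv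
    have := hH.eigenvectorBasis.orthonormal.1 k
    rw [EuclideanSpace.norm_eq, Real.sqrt_eq_one] at this
    simpa [u, Complex.normSq_eq_norm_sq] using this
  · have key : A = ∑ k, hH.eigenvalues k • P (u k) := by
      conv_lhs => rw [hH.spectral_theorem]
      ext i j
      simp [Unitary.conjStarAlgAut_apply, Matrix.mul_apply, Matrix.diagonal_apply,
        Matrix.sum_apply, P, u, Matrix.star_apply, Matrix.IsHermitian.eigenvectorUnitary_apply]
      refine Finset.sum_congr rfl fun k _ => ?_
      ring
    rw [key]
    exact IsRep.sum _ _ fun k _ => (IsRep.single (by simp)).smul (hA.eigenvalues_nonneg k)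

lemma P_proj (v : Fin n → ℂ) (hv : ∑ i, Complex.normSq (v i) = 1) : IsStarProjection (P v) := by
  constructor
  · ext i j
    simp only [P, Matrix.mul_apply, Matrix.of_apply]
    have : ∑ k, (starRingEnd ℂ) (v k) * v k = 1 := by
      simp only [← Complex.normSq_eq_conj_mul_self]
      exact_mod_cast hv
    calc _ = v i * (∑ k, (starRingEnd ℂ) (v k) * v k) * (starRingEnd ℂ) (v j) := by
          rw [Finset.mul_sum, Finset.sum_mul]
          exact Finset.sum_congr rfl fun k _ => by ring
      _ = _ := by rw [this]; ring
  · ext i j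
    simp [P, Matrix.star_apply, mul_comm]

lemma P_trace (v : Fin n → ℂ) (hv : ∑ i, Complex.normSq (v i) = 1) : (P v).trace = 1 := by
  simp only [P, Matrix.trace, Matrix.diag, Matrix.of_apply, Complex.mul_conj]
  exact_mod_cast hv

/-- Hermitian matrices as a real space. -/
noncomputable abbrev E (n : ℕ) := selfAdjoint.submodule ℝ (Matrix (Fin n) (Fin n) ℂ)

lemma exists_rep_Icc (c C : ℝ) (hc : 0 < c) :
    ∃ S : Finset (Fin n → ℂ), (∀ v ∈ S, ∑ i, Complex.normSq (v i) = 1) ∧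
      ∀ A : Matrix (Fin n) (Fin n) ℂ, algebraMap ℝ _ c ≤ A → A ≤ algebraMap ℝ _ C →
        IsRep S A := by
  classical
  let K : Set (E n) := {x | algebraMap ℝ _ c ≤ x.1 ∧ x.1 ≤ algebraMap ℝ _ C}
  have h0c : (0 : Matrix (Fin n) (Fin n) ℂ) ≤ algebraMap ℝ _ c := algebraMap_nonneg _ hc.le
  have hKconv : Convex ℝ K := by
    have : K = (E n).subtype ⁻¹' Set.Icc (algebraMap ℝ _ c) (algebraMap ℝ _ C) := rfl
    rw [this]
    exact (convex_Icc _ _).linear_preimage _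
  have hKcomp : IsCompact K := by
    have : ProperSpace (E n) := FiniteDimensional.proper_real _
    refine Metric.isCompact_of_isClosed_isBounded ?_ ?_
    · exact (isClosed_le continuous_const continuous_subtype_val).inter
        (isClosed_le continuous_subtype_val continuous_const)
    · refine isBounded_iff_forall_norm_le.2
        ⟨‖algebraMap ℝ (Matrix (Fin n) (Fin n) ℂ) C‖, fun x hx => ?_⟩
      exact CStarAlgebra.norm_le_norm_of_nonneg_of_le (h0c.trans hx.1) hx.2
  let U : Set (E n) := {x | 0 ≤ x.1}
  have hU : U ∈ 𝓝ˢ K := by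
    rw [mem_nhdsSet_iff_forall]
    intro x hx
    refine Filter.mem_of_superset (Metric.ball_mem_nhds x hc) fun y hy => ?_
    rw [mem_ball_iff_norm] at hy
    have hsa : IsSelfAdjoint (y.1 - x.1) := (y - x).2
    have h1 := hsa.neg_algebraMap_norm_le_self
    have h2 : algebraMap ℝ (Matrix (Fin n) (Fin n) ℂ) ‖y.1 - x.1‖ ≤ algebraMap ℝ _ c :=
      algebraMap_mono _ hy.le
    have h3 := add_le_add (add_le_add h1 h2) hx.1
    show 0 ≤ y.1
    have h4 := sub_nonneg.2 h3
    convert h4 using 1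
    abel
  obtain ⟨t, hKt, htU⟩ := hKconv.exists_subset_interior_convexHull_finset_of_isCompact hKcomp hU
  have hex : ∀ x : E n, ∃ S : Finset (Fin n → ℂ), x ∈ t →
      (∀ v ∈ S, ∑ i, Complex.normSq (v i) = 1) ∧ IsRep S x.1 := by
    intro x
    by_cases hx : x ∈ t
    · obtain ⟨S, hS⟩ := exists_rep_of_nonneg x.1 (htU (subset_convexHull ℝ _ hx))
      exact ⟨S, fun _ => hS⟩
    · exact ⟨∅, fun h => absurd h hx⟩
  choose S hS using hex
  refine ⟨t.biUnion S, ?_, ?_⟩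
  · intro v hv
    obtain ⟨x, hx, hv⟩ := Finset.mem_biUnion.1 hv
    exact (hS x hx).1 v hv
  · intro A hcA hAC
    have hsa : IsSelfAdjoint A := IsSelfAdjoint.of_nonneg (h0c.trans hcA)
    have hmem : (⟨A, hsa⟩ : E n) ∈ convexHull ℝ (t : Set (E n)) :=
      interior_subset (hKt ⟨hcA, hAC⟩)
    have hconv : Convex ℝ {y : E n | IsRep (t.biUnion S) y.1} := by
      intro x hx y hy a b ha hb _
      exact (IsRep.smul hx ha).add (IsRep.smul hy hb)
    exact convexHull_min (fun x hx => ((hS x hx).2.mono (Finset.subset_biUnion_of_mem S hx)))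
      hconv hmem

lemma main (n : ℕ) (hn : 1 ≤ n)
    (lam Lam : ℝ) (hlam : 0 < lam) (hlamLam : lam < Lam)
    (b : Fin n → (Fin n → ℂ))
    (hb : ∀ i j, ∑ k, (starRingEnd ℂ) (b i k) * b j k = if i = j then 1 else 0) :
    ∃ (N : ℕ), 1 ≤ N ∧
    ∃ (ζ : Fin N → (Fin n → ℂ)) (lamStar LamStar : ℝ),
      0 < lamStar ∧ lamStar < LamStar ∧
      (∀ k, ∑ i, Complex.normSq (ζ k i) = 1) ∧
      (∃ ι : Fin n → Fin N, Function.Injective ι ∧ ∀ i, ζ (ι i) = b i) ∧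
      ∀ (A : Matrix (Fin n) (Fin n) ℂ) (hA : A.IsHermitian),
        (∀ i, hA.eigenvalues i ∈ Set.Icc lam Lam) →
        ∃ β : Fin N → ℝ,
          (∀ k, β k ∈ Set.Icc lamStar LamStar) ∧
          A = ∑ k, (β k : ℂ) • Matrix.of (fun i j => ζ k i * (starRingEnd ℂ) (ζ k j)) := by
  classical
  obtain ⟨S₀, hS₀, hrep⟩ := exists_rep_Icc (n := n) (lam / 2) Lam (half_pos hlam)
  have hbu : ∀ i, ∑ k, Complex.normSq (b i k) = 1 := by
    intro i
    have h := hb i i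
    simp only [← Complex.normSq_eq_conj_mul_self, if_true] at h
    exact_mod_cast h
  have hbinj : Function.Injective b := by
    intro i j hij
    by_contra hne
    have h1 := hb i j
    rw [← hij, hb i i] at h1
    simp [hne] at h1
  let S := S₀ ∪ Finset.univ.image b
  have hS : ∀ v ∈ S, ∑ i, Complex.normSq (v i) = 1 := by
    intro v hv
    rcases Finset.mem_union.1 hv with hv | hv
    · exact hS₀ v hv
    · obtain ⟨i, -, rfl⟩ := Finset.mem_image.1 hv
      exact hbu i
  have hbS : ∀ i, b i ∈ S := fun i => Finset.mem_union_right _ (by simp)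
  have hcard : 1 ≤ S.card := Finset.card_pos.2 ⟨_, hbS ⟨0, hn⟩⟩
  have hcard' : (0 : ℝ) < S.card := by exact_mod_cast hcard
  let e := S.equivFin
  let ε : ℝ := lam / 2 / S.card
  have hε : 0 < ε := by positivity
  have hLam : 0 < Lam := hlam.trans hlamLam
  refine ⟨S.card, hcard, fun k => (e.symm k).1, ε, n * Lam + ε + 1, hε, ?_, ?_, ?_, ?_⟩
  · have : 0 ≤ n * Lam := by positivity
    linarith
  · exact fun k => hS _ (e.symm k).2
  · refine ⟨fun i => e ⟨b i, hbS i⟩, fun i j hij => ?_, fun i => by simp⟩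
    exact hbinj (congrArg Subtype.val (e.injective hij))
  intro A hA hev
  have hspec := hA.spectrum_real_eq_range_eigenvalues
  have hAsa : IsSelfAdjoint A := hA
  have h1 : algebraMap ℝ _ lam ≤ A := by
    rw [algebraMap_le_iff_le_spectrum (a := A), hspec]
    rintro _ ⟨i, rfl⟩
    exact (hev i).1
  have h2 : A ≤ algebraMap ℝ _ Lam := by
    rw [le_algebraMap_iff_spectrum_le (a := A), hspec]
    rintro _ ⟨i, rfl⟩
    exact (hev i).2
  have hQ0 : 0 ≤ ε • ∑ v ∈ S, P v :=
    smul_nonneg hε.le (Finset.sum_nonneg fun v hv => (P_proj v (hS v hv)).nonneg)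
  have hQ1 : ε • ∑ v ∈ S, P v ≤ algebraMap ℝ _ (lam / 2) := by
    have : ∑ v ∈ S, P v ≤ ∑ v ∈ S, 1 := Finset.sum_le_sum fun v hv => (P_proj v (hS v hv)).le_one
    refine (smul_le_smul_of_nonneg_left this hε.le).trans (le_of_eq ?_)
    rw [Finset.sum_const, ← Nat.cast_smul_eq_nsmul ℝ, smul_smul, Algebra.algebraMap_eq_smul_one]
    congr 1
    exact div_mul_cancel₀ _ hcard'.ne'
  obtain ⟨f, hf, hAf⟩ := (hrep (A - ε • ∑ v ∈ S, P v) (by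
      have h := sub_le_sub h1 hQ1
      rw [← map_sub, sub_half] at h
      exact h) ((sub_le_self _ hQ0).trans h2)).mono (T := S) Finset.subset_union_left
  have hA' : A = ∑ v ∈ S, (f v + ε) • P v := by
    rw [sub_eq_iff_eq_add] at hAf
    rw [hAf, Finset.smul_sum, ← Finset.sum_add_distrib]
    exact Finset.sum_congr rfl fun v _ => (add_smul _ _ _).symm
  have htr : ∑ v ∈ S, (f v + ε) ≤ n * Lam := by
    have h3 : A.trace = ((∑ v ∈ S, (f v + ε) : ℝ) : ℂ) := by
      conv_lhs => rw [hA', Matrix.trace_sum]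
      rw [Complex.ofReal_sum]
      refine Finset.sum_congr rfl fun v hv => ?_
      rw [Matrix.trace_smul, P_trace v (hS v hv)]
      simp
    have h4 := hA.trace_eq_sum_eigenvalues
    rw [h3] at h4
    have h5 : ∑ v ∈ S, (f v + ε) = ∑ i, hA.eigenvalues i := by
      apply Complex.ofReal_injective
      rw [h4]
      simp
    rw [h5]
    calc _ ≤ ∑ _i : Fin n, Lam := Finset.sum_le_sum fun i _ => (hev i).2
      _ = _ := by simp
  refine ⟨fun k => f (e.symm k).1 + ε, fun k => ⟨?_, ?_⟩, ?_⟩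
  · have := hf (e.symm k).1
    linarith
  · have := Finset.single_le_sum (f := fun v => f v + ε)
      (fun v _ => add_nonneg (hf v) hε.le) (e.symm k).2
    linarith
  · conv_lhs => rw [hA']
    rw [← Finset.sum_coe_sort S, ← e.symm.sum_comp]
    refine Finset.sum_congr rfl fun k _ => ?_
    rw [Complex.coe_smul]
    rfl

end PinchedAux

/-- **Decomposition of Hermitian matrices with pinched spectrum into rank-one
projections.** For every `n ≥ 1` and `0 < λ < Λ < ∞`, there exist `N ≥ 1`, unit
vectors `ζ₁, …, ζ_N ∈ ℂⁿ` and `0 < λ⋆ < Λ⋆ < ∞`, depending only on `n`, `λ`, `Λ`,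
such that every Hermitian `n × n` complex matrix `A` whose eigenvalues all lie in
`[λ, Λ]` can be written `A = ∑ₖ βₖ ζₖ ζₖ*` with `βₖ ∈ [λ⋆, Λ⋆]`; moreover the `ζₖ`
can be chosen to contain any prescribed orthonormal basis of `ℂⁿ`. -/
theorem hermitian_pinched_spectrum_rank_one_decomposition
    (n : ℕ) (hn : 1 ≤ n)
    (lam Lam : ℝ) (hlam : 0 < lam) (hlamLam : lam < Lam)
    (b : Fin n → (Fin n → ℂ))
    (hb : ∀ i j, ∑ k, (starRingEnd ℂ) (b i k) * b j k = if i = j then 1 else 0) :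
    ∃ (N : ℕ), 1 ≤ N ∧
    ∃ (ζ : Fin N → (Fin n → ℂ)) (lamStar LamStar : ℝ),
      0 < lamStar ∧ lamStar < LamStar ∧
      (∀ k, ∑ i, Complex.normSq (ζ k i) = 1) ∧
      (∃ ι : Fin n → Fin N, Function.Injective ι ∧ ∀ i, ζ (ι i) = b i) ∧
      ∀ (A : Matrix (Fin n) (Fin n) ℂ) (hA : A.IsHermitian),
        (∀ i, hA.eigenvalues i ∈ Set.Icc lam Lam) →
        ∃ β : Fin N → ℝ,
          (∀ k, β k ∈ Set.Icc lamStar LamStar) ∧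
          A = ∑ k, (β k : ℂ) • Matrix.of (fun i j => ζ k i * (starRingEnd ℂ) (ζ k j)) := by
  exact PinchedAux.main n hn lam Lam hlam hlamLam b hb
end
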